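/- Let W_1s be a finitely-valued random variable, X1^n a finitely-valued random sequence jointly distributed with W_1s, and let Y1^n and T^n be generated from X1^n by memoryless channels p(y1|x1) and Vhat2(t|x1) applied componentwise (conditionally independent of everything else given X1^n). Then there exist a finite-valued random variable W jointly distributed with single letters (X1, Y1, T) whose joint law factors as p(w, x1, y1, t) = p(w) p(x1|w) p(y1|x1) Vhat2(t|x1), and a number gamma >= 0, such that (1/n) H(T^n | W_1s) = H(T|W) + gamma and (1/n) H(Y1^n | W_1s) = H(Y1|W) + gamma. (Explicitly, W may be taken as W = (W_Q, Q) with W_i = (Y1^{i-1}, T_{i+1},...,T_n, W_1s), Q uniform on {1,...,n} independent of everything else, X1 = X_{1Q}, Y1 = Y_{1Q}, T = T_Q.) -/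

import Mathlib

open Finset Real Filter
open scoped Classical

namespace Paper

/-- `p` is a probability mass function on the finite type `α`. -/
def IsPMF {α : Type*} [Fintype α] (p : α → ℝ) : Prop :=
  (∀ a, 0 ≤ p a) ∧ ∑ a, p a = 1

/-- `k` is a transition probability (channel) from `α` to the finite type `β`. -/
def IsKernel {α β : Type*} [Fintype β] (k : α → β → ℝ) : Prop :=
  ∀ a, IsPMF (k a)

variable {Ω : Type*} [Fintype Ω]

/-- Probability that the random variable `X` takes the value `x`, under the weight `p`. -/
noncomputable def pr {α : Type*} (p : Ω → ℝ) (X : Ω → α) (x : α) : ℝ :=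
  ∑ ω, if X ω = x then p ω else 0

/-- Shannon entropy (base 2) of the random variable `X` under `p`. -/
noncomputable def ent {α : Type*} [Fintype α] (p : Ω → ℝ) (X : Ω → α) : ℝ :=
  ∑ x, -(pr p X x * Real.logb 2 (pr p X x))

/-- Conditional entropy `H(X|Y) = H(X,Y) - H(Y)`. -/
noncomputable def condEnt {α β : Type*} [Fintype α] [Fintype β]
    (p : Ω → ℝ) (X : Ω → α) (Y : Ω → β) : ℝ :=
  ent p (fun ω => (X ω, Y ω)) - ent p Y

/-- Mutual information `I(X;Y) = H(X) + H(Y) - H(X,Y)`. -/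
noncomputable def mi {α β : Type*} [Fintype α] [Fintype β]
    (p : Ω → ℝ) (X : Ω → α) (Y : Ω → β) : ℝ :=
  ent p X + ent p Y - ent p (fun ω => (X ω, Y ω))

/-- Conditional mutual information `I(X;Y|Z) = H(X,Z) + H(Y,Z) - H(X,Y,Z) - H(Z)`. -/
noncomputable def cmi {α β γ : Type*} [Fintype α] [Fintype β] [Fintype γ]
    (p : Ω → ℝ) (X : Ω → α) (Y : Ω → β) (Z : Ω → γ) : ℝ :=
  ent p (fun ω => (X ω, Z ω)) + ent p (fun ω => (Y ω, Z ω))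
    - ent p (fun ω => (X ω, Y ω, Z ω)) - ent p Z

/-- The Markov chain `A → B → C`: `A` and `C` are conditionally independent given `B`. -/
def MarkovChain {α β γ : Type*} (p : Ω → ℝ) (A : Ω → α) (B : Ω → β) (C : Ω → γ) : Prop :=
  ∀ a b c, pr p (fun ω => (A ω, B ω, C ω)) (a, b, c) * pr p B b =
    pr p (fun ω => (A ω, B ω)) (a, b) * pr p (fun ω => (B ω, C ω)) (b, c)

section Helpers

lemma pr_nonneg {α : Type*} {p : Ω → ℝ} (hp : ∀ ω, 0 ≤ p ω) (X : Ω → α) (x : α) :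
    0 ≤ pr p X x := by
  unfold pr
  refine Finset.sum_nonneg fun ω _ => ?_
  split_ifs
  · exact hp ω
  · exact le_rfl

lemma le_pr {α : Type*} {p : Ω → ℝ} (hp : ∀ ω, 0 ≤ p ω) (X : Ω → α) (ω : Ω) :
    p ω ≤ pr p X (X ω) := by
  unfold pr
  have h := Finset.single_le_sum (f := fun ω' => if X ω' = X ω then p ω' else 0)
    (s := Finset.univ) (fun ω' _ => by
      split_ifs
      · exact hp ω'
      · exact le_rfl) (Finset.mem_univ ω)
  simpa using h

/-- Law of the unconscious statistician. -/
lemma sum_pr_mul {α : Type*} [Fintype α] (p : Ω → ℝ) (X : Ω → α) (g : α → ℝ) :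
    ∑ x, pr p X x * g x = ∑ ω, p ω * g (X ω) := by
  unfold pr
  simp only [Finset.sum_mul]
  rw [Finset.sum_comm]
  refine Finset.sum_congr rfl fun ω _ => ?_
  rw [Finset.sum_eq_single (X ω)]
  · simp
  · intro b _ hb
    simp [Ne.symm hb]
  · simp

lemma sum_pr {α : Type*} [Fintype α] (p : Ω → ℝ) (X : Ω → α) :
    ∑ x, pr p X x = ∑ ω, p ω := by
  have := sum_pr_mul p X (fun _ => 1)
  simpa using this

lemma ent_eq {α : Type*} [Fintype α] (p : Ω → ℝ) (X : Ω → α) :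
    ent p X = ∑ ω, p ω * (-Real.logb 2 (pr p X (X ω))) := by
  rw [← sum_pr_mul p X (fun x => -Real.logb 2 (pr p X x))]
  unfold ent
  exact Finset.sum_congr rfl fun x _ => by ring

lemma ent_congr {α β : Type*} [Fintype α] [Fintype β] (p : Ω → ℝ) (X : Ω → α) (Y : Ω → β)
    (h : ∀ ω ω', X ω = X ω' ↔ Y ω = Y ω') : ent p X = ent p Y := by
  rw [ent_eq, ent_eq]
  have : ∀ ω, pr p X (X ω) = pr p Y (Y ω) := by
    intro ω
    unfold pr
    refine Finset.sum_congr rfl fun ω' _ => ?_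
    simp only [h ω' ω]
  simp only [this]

lemma pr_fst_sum {α β : Type*} [Fintype α] (p : Ω → ℝ) (X : Ω → α) (Z : Ω → β) (z : β) :
    ∑ x, pr p (fun ω => (X ω, Z ω)) (x, z) = pr p Z z := by
  unfold pr
  rw [Finset.sum_comm]
  refine Finset.sum_congr rfl fun ω _ => ?_
  rw [Finset.sum_eq_single (X ω)]
  · simp
  · intro b _ hb
    simp [Ne.symm hb]
  · simp

/-- Strong subadditivity of entropy. -/
lemma ent_submod {α β γ : Type*} [Fintype α] [Fintype β] [Fintype γ] {p : Ω → ℝ}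
    (hp : IsPMF p) (X : Ω → α) (Y : Ω → β) (Z : Ω → γ) :
    ent p (fun ω => (X ω, Y ω, Z ω)) + ent p Z ≤
      ent p (fun ω => (X ω, Z ω)) + ent p (fun ω => (Y ω, Z ω)) := by
  have hp0 := hp.1
  have hl2 : 0 < Real.log 2 := Real.log_pos (by norm_num)
  set a : α × β × γ → ℝ := pr p (fun ω => (X ω, Y ω, Z ω)) with ha
  set b : α × γ → ℝ := pr p (fun ω => (X ω, Z ω)) with hb
  set c : β × γ → ℝ := pr p (fun ω => (Y ω, Z ω)) with hc
  set d : γ → ℝ := pr p Z with hd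
  have ha0 : ∀ v, 0 ≤ a v := pr_nonneg hp0 _
  have hb0 : ∀ v, 0 ≤ b v := pr_nonneg hp0 _
  have hc0 : ∀ v, 0 ≤ c v := pr_nonneg hp0 _
  have hd0 : ∀ v, 0 ≤ d v := pr_nonneg hp0 _
  let g : α × β × γ → ℝ := fun v => b (v.1, v.2.2) * c (v.2.1, v.2.2) / (a v * d v.2.2)
  have key : ∑ ω, p ω * g (X ω, Y ω, Z ω) ≤ 1 := by
    rw [← sum_pr_mul p (fun ω => (X ω, Y ω, Z ω)) g]
    calc ∑ v, a v * g v ≤ ∑ v : α × β × γ, b (v.1, v.2.2) * c (v.2.1, v.2.2) / d v.2.2 := by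
          refine Finset.sum_le_sum fun v _ => ?_
          have hn : 0 ≤ b (v.1, v.2.2) * c (v.2.1, v.2.2) / d v.2.2 :=
            div_nonneg (mul_nonneg (hb0 _) (hc0 _)) (hd0 _)
          rcases eq_or_lt_of_le (ha0 v) with h | h
          · rw [← h]; simpa using hn
          · have : a v * g v = b (v.1, v.2.2) * c (v.2.1, v.2.2) / d v.2.2 := by
              simp only [g]
              rw [mul_div_assoc', mul_div_mul_left _ _ h.ne']
            exact this.le
      _ = ∑ z, (∑ x, b (x, z)) * (∑ y, c (y, z)) / d z := by
          simp only [Fintype.sum_prod_type]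
          rw [Finset.sum_congr rfl (fun x _ => Finset.sum_comm), Finset.sum_comm]
          refine Finset.sum_congr rfl fun z _ => ?_
          rw [Finset.sum_mul_sum, Finset.sum_div]
          exact Finset.sum_congr rfl fun x _ => by rw [Finset.sum_div]
      _ = ∑ z, d z * d z / d z := by
          refine Finset.sum_congr rfl fun z _ => ?_
          rw [hb, hc, pr_fst_sum p X Z z, pr_fst_sum p Y Z z]
      _ = ∑ z, d z := by
          refine Finset.sum_congr rfl fun z _ => ?_
          rcases eq_or_ne (d z) 0 with h | h
          · simp [h]
          · field_simp
      _ = 1 := by rw [hd, sum_pr, hp.2]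
      _ ≤ 1 := le_rfl
  have hpt : ∀ ω, p ω * (1 - g (X ω, Y ω, Z ω)) ≤ Real.log 2 *
      (p ω * (Real.logb 2 (a (X ω, Y ω, Z ω)) + Real.logb 2 (d (Z ω))
        - Real.logb 2 (b (X ω, Z ω)) - Real.logb 2 (c (Y ω, Z ω)))) := by
    intro ω
    rcases eq_or_lt_of_le (hp0 ω) with h | h
    · simp [← h]
    · have h1 : 0 < a (X ω, Y ω, Z ω) := lt_of_lt_of_le h (le_pr hp0 (fun ω => (X ω, Y ω, Z ω)) ω)
      have h2 : 0 < b (X ω, Z ω) := lt_of_lt_of_le h (le_pr hp0 (fun ω => (X ω, Z ω)) ω)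
      have h3 : 0 < c (Y ω, Z ω) := lt_of_lt_of_le h (le_pr hp0 (fun ω => (Y ω, Z ω)) ω)
      have h4 : 0 < d (Z ω) := lt_of_lt_of_le h (le_pr hp0 Z ω)
      have h5 := Real.log_le_sub_one_of_pos (x := g (X ω, Y ω, Z ω)) (by
        simp only [g]; positivity)
      have h6 : Real.log (g (X ω, Y ω, Z ω)) = Real.log (b (X ω, Z ω)) + Real.log (c (Y ω, Z ω))
          - (Real.log (a (X ω, Y ω, Z ω)) + Real.log (d (Z ω))) := by
        simp only [g]
        rw [Real.log_div (by positivity) (by positivity), Real.log_mul h2.ne' h3.ne',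
          Real.log_mul h1.ne' h4.ne']
      have h7 : Real.log 2 *
        (p ω * (Real.logb 2 (a (X ω, Y ω, Z ω)) + Real.logb 2 (d (Z ω))
        - Real.logb 2 (b (X ω, Z ω)) - Real.logb 2 (c (Y ω, Z ω)))) =
          p ω * (- Real.log (g (X ω, Y ω, Z ω))) := by
        rw [h6]
        simp only [Real.logb]
        field_simp
        ring
      rw [h7]
      exact mul_le_mul_of_nonneg_left (by linarith) h.le
  have hsum := Finset.sum_le_sum (s := Finset.univ) (fun ω _ => hpt ω)
  rw [← Finset.mul_sum] at hsum
  have hl : ∑ ω, p ω * (1 - g (X ω, Y ω, Z ω)) = 1 - ∑ ω, p ω * g (X ω, Y ω, Z ω) := by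
    simp only [mul_sub, mul_one, Finset.sum_sub_distrib, hp.2]
  rw [hl] at hsum
  have hpos := nonneg_of_mul_nonneg_right (le_trans (by linarith) hsum) hl2
  simp only [ent_eq]
  rw [← sub_nonneg]
  refine hpos.trans (le_of_eq ?_)
  simp only [← Finset.sum_add_distrib, ← Finset.sum_sub_distrib]
  refine Finset.sum_congr rfl fun ω _ => ?_
  simp only [← ha, ← hb, ← hc, ← hd]
  ring

/-- Extracting one coordinate of a product law. -/
lemma prod_extract {ι B : Type*} [Fintype ι] [DecidableEq ι] [Fintype B] (k : ι → B → ℝ)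
    (i : ι) (hk : ∑ s, k i s = 1) (f : (ι → B) → ℝ)
    (hf : ∀ t s, f (Function.update t i s) = f t) (s : B) :
    ∑ t : ι → B, (if t i = s then f t * ∏ j, k j (t j) else 0) =
      k i s * ∑ t : ι → B, f t * ∏ j, k j (t j) := by
  have hupd : ∀ (t : ι → B) (s' : B),
      (∏ j, k j (Function.update t i s' j)) * k i (t i) = (∏ j, k j (t j)) * k i s' := by
    intro t s'
    rw [← Finset.mul_prod_erase Finset.univ _ (Finset.mem_univ i),
      ← Finset.mul_prod_erase Finset.univ (fun j => k j (t j)) (Finset.mem_univ i)]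
    have : ∏ j ∈ Finset.univ.erase i, k j (Function.update t i s' j) =
        ∏ j ∈ Finset.univ.erase i, k j (t j) := by
      refine Finset.prod_congr rfl fun j hj => ?_
      rw [Function.update_of_ne (Finset.ne_of_mem_erase hj)]
    rw [this]
    simp only [Function.update_self]
    ring
  let e : ((ι → B) × B) ≃ ((ι → B) × B) :=
    { toFun := fun v => (Function.update v.1 i v.2, v.1 i)
      invFun := fun v => (Function.update v.1 i v.2, v.1 i)
      left_inv := fun v => by simp
      right_inv := fun v => by simp }
  calc ∑ t : ι → B, (if t i = s then f t * ∏ j, k j (t j) else 0)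
      = ∑ v : (ι → B) × B, (if v.1 i = s then f v.1 * ∏ j, k j (v.1 j) else 0) * k i v.2 := by
        rw [Fintype.sum_prod_type]
        refine Finset.sum_congr rfl fun t _ => ?_
        exact (by rw [← Finset.mul_sum, hk, mul_one] :
          _ = ∑ y, (if t i = s then f t * ∏ j, k j (t j) else 0) * k i y)
    _ = ∑ v : (ι → B) × B, (if v.2 = s then f v.1 * ((∏ j, k j (v.1 j)) * k i v.2) else 0) := by
        rw [← Equiv.sum_comp e]
        refine Finset.sum_congr rfl fun v _ => ?_
        simp only [e, Equiv.coe_fn_mk, Function.update_self, hf]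
        split_ifs
        · rw [mul_assoc, hupd]
        · simp
    _ = k i s * ∑ t : ι → B, f t * ∏ j, k j (t j) := by
        rw [Fintype.sum_prod_type, Finset.mul_sum]
        refine Finset.sum_congr rfl fun t _ => ?_
        simp
        ring

lemma ent_scale {ι α : Type*} [Fintype ι] [Fintype α] (q : ι → α → ℝ) (c : ℝ)
    (hq : ∀ i, ∑ a, q i a = 1) :
    ∑ i, ∑ a, -((c * q i a) * Real.logb 2 (c * q i a)) =
      c * ∑ i, ∑ a, -(q i a * Real.logb 2 (q i a)) - Fintype.card ι * (c * Real.logb 2 c) := by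
  have h : ∀ x : ℝ, -((c * x) * Real.logb 2 (c * x)) =
      c * (-(x * Real.logb 2 x)) - x * (c * Real.logb 2 c) := by
    intro x
    rcases eq_or_ne c 0 with hc | hc
    · simp [hc]
    rcases eq_or_ne x 0 with hx | hx
    · simp [hx]
    rw [Real.logb_mul hc hx]; ring
  simp only [h, Finset.sum_sub_distrib, ← Finset.mul_sum, ← Finset.sum_mul, hq]
  simp
  ring

end Helpers

/-! ## Statement 15: single-letterization with a common slack `γ`
(equations (122)–(127) of the paper). -/

section Stmt15

variable {X1 Y1 T Wt : Type} [Fintype X1] [Fintype Y1] [Fintype T] [Fintype Wt]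

/-- Joint law of `(W_1s, X_1^n, Y_1^n, T^n)` where `Y_1^n` and `T^n` are the outputs of
the memoryless channels `p(y_1|x_1)` and `Vhat2(t|x_1)` applied componentwise to `X_1^n`. -/
noncomputable def jointYT (ch1 : X1 → Y1 → ℝ) (v2 : X1 → T → ℝ) (n : ℕ)
    (μ : Wt × (Fin n → X1) → ℝ) :
    Wt × (Fin n → X1) × (Fin n → Y1) × (Fin n → T) → ℝ :=
  fun (w, x1, y1, t) =>
    μ (w, x1) * (∏ i, ch1 (x1 i) (y1 i)) * ∏ i, v2 (x1 i) (t i)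

lemma prod_sum_one {ι B : Type*} [Fintype ι] [DecidableEq ι] [Fintype B] (k : ι → B → ℝ)
    (hk : ∀ i, ∑ s, k i s = 1) : ∑ t : ι → B, ∏ j, k j (t j) = 1 := by
  have := Finset.prod_univ_sum (fun _ : ι => (Finset.univ : Finset B)) (fun i s => k i s)
  simp only [hk, Finset.prod_const_one, Fintype.piFinset_univ] at this
  exact this.symm

lemma jointYT_isPMF {ch1 : X1 → Y1 → ℝ} {v2 : X1 → T → ℝ}
    (hch1 : IsKernel ch1) (hv2 : IsKernel v2)
    {n : ℕ} {μ : Wt × (Fin n → X1) → ℝ} (hμ : IsPMF μ) : IsPMF (jointYT ch1 v2 n μ) := by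
  constructor
  · rintro ⟨w, x, y, t⟩
    exact mul_nonneg (mul_nonneg (hμ.1 _) (Finset.prod_nonneg fun i _ => (hch1 _).1 _))
      (Finset.prod_nonneg fun i _ => (hv2 _).1 _)
  · simp only [Fintype.sum_prod_type, jointYT, ← Finset.mul_sum]
    have h1 : ∀ x : Fin n → X1, ∑ t : Fin n → T, ∏ j, v2 (x j) (t j) = 1 := fun x =>
      prod_sum_one (fun j => v2 (x j)) (fun j => (hv2 _).2)
    have h2 : ∀ x : Fin n → X1, ∑ t : Fin n → Y1, ∏ j, ch1 (x j) (t j) = 1 := fun x =>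
      prod_sum_one (fun j => ch1 (x j)) (fun j => (hch1 _).2)
    simp only [h1, mul_one, ← Finset.mul_sum, h2]
    have h3 := hμ.2
    rwa [Fintype.sum_prod_type] at h3

/-- The auxiliary variable: `W_1s`, the `Y`'s before `a` and the `T`'s from `b` on. -/
def auxV (n a b : ℕ) (ω : Wt × (Fin n → X1) × (Fin n → Y1) × (Fin n → T)) :
    Wt × (Fin n → Option Y1) × (Fin n → Option T) :=
  (ω.1, fun j => if j.1 < a then some (ω.2.2.1 j) else none,
    fun j => if b ≤ j.1 then some (ω.2.2.2 j) else none)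

lemma auxV_eq_iff (n a b : ℕ) (ω ω' : Wt × (Fin n → X1) × (Fin n → Y1) × (Fin n → T)) :
    auxV n a b ω = auxV n a b ω' ↔ ω.1 = ω'.1 ∧ (∀ j : Fin n, j.1 < a → ω.2.2.1 j = ω'.2.2.1 j) ∧
      (∀ j : Fin n, b ≤ j.1 → ω.2.2.2 j = ω'.2.2.2 j) := by
  unfold auxV
  simp only [Prod.mk.injEq, funext_iff]
  refine and_congr Iff.rfl (and_congr ?_ ?_)
  · refine forall_congr' fun j => ?_
    by_cases h : j.1 < a <;> simp [h]
  · refine forall_congr' fun j => ?_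
    by_cases h : b ≤ j.1 <;> simp [h]

lemma extract_T {ch1 : X1 → Y1 → ℝ} {v2 : X1 → T → ℝ} (hv2 : IsKernel v2)
    {n : ℕ} (μ : Wt × (Fin n → X1) → ℝ) (i : Fin n)
    (a : Wt × (Fin n → Option Y1) × (Fin n → Option T)) (s : T) :
    pr (jointYT ch1 v2 n μ) (fun ω => (ω.2.2.2 i, auxV n i (i+1) ω)) (s, a) =
      ∑ x, pr (jointYT ch1 v2 n μ) (fun ω => (ω.2.1 i, auxV n i (i+1) ω)) (x, a) * v2 x s := by
  have hR : ∑ x, pr (jointYT ch1 v2 n μ) (fun ω => (ω.2.1 i, auxV n i (i+1) ω)) (x, a) * v2 x s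
      = ∑ ω, (if auxV n i (i+1) ω = a then jointYT ch1 v2 n μ ω else 0) * v2 (ω.2.1 i) s := by
    unfold pr
    simp only [Finset.sum_mul]
    rw [Finset.sum_comm]
    refine Finset.sum_congr rfl fun ω _ => ?_
    rw [Finset.sum_eq_single (ω.2.1 i)]
    · simp
    · intro b _ hb
      simp [Ne.symm hb]
    · simp
  rw [hR]
  unfold pr
  simp only [Fintype.sum_prod_type]
  refine Finset.sum_congr rfl fun w _ => Finset.sum_congr rfl fun x _ =>
    Finset.sum_congr rfl fun y _ => ?_
  have h := prod_extract (fun j => v2 (x j)) i (hv2 _).2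
    (fun t => if auxV n i (i+1) (w, x, y, t) = a then μ (w, x) * ∏ j, ch1 (x j) (y j) else 0)
    (by
      intro t s'
      have : auxV n i (i+1) (w, x, y, Function.update t i s') = auxV n i (i+1) (w, x, y, t) := by
        rw [auxV_eq_iff]
        refine ⟨rfl, fun _ _ => rfl, fun j hj => ?_⟩
        have : j ≠ i := by rintro rfl; omega
        simp [this]
      rw [this]) s
  rw [Finset.mul_sum] at h
  refine Eq.trans (Finset.sum_congr rfl fun t _ => ?_) (h.trans
    (Finset.sum_congr rfl fun t _ => ?_))
  · simp only [Prod.mk.injEq, jointYT]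
    by_cases h1 : t i = s <;> by_cases h2 : auxV n i (i+1) (w, x, y, t) = a <;> simp [h1, h2]
  · simp only [jointYT]
    by_cases h2 : auxV n i (i+1) (w, x, y, t) = a <;> simp [h2]
    ring

lemma extract_Y {ch1 : X1 → Y1 → ℝ} {v2 : X1 → T → ℝ} (hch1 : IsKernel ch1)
    {n : ℕ} (μ : Wt × (Fin n → X1) → ℝ) (i : Fin n)
    (a : Wt × (Fin n → Option Y1) × (Fin n → Option T)) (s : Y1) :
    pr (jointYT ch1 v2 n μ) (fun ω => (ω.2.2.1 i, auxV n i (i+1) ω)) (s, a) =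
      ∑ x, pr (jointYT ch1 v2 n μ) (fun ω => (ω.2.1 i, auxV n i (i+1) ω)) (x, a) * ch1 x s := by
  have hR : ∑ x, pr (jointYT ch1 v2 n μ) (fun ω => (ω.2.1 i, auxV n i (i+1) ω)) (x, a) * ch1 x s
      = ∑ ω, (if auxV n i (i+1) ω = a then jointYT ch1 v2 n μ ω else 0) * ch1 (ω.2.1 i) s := by
    unfold pr
    simp only [Finset.sum_mul]
    rw [Finset.sum_comm]
    refine Finset.sum_congr rfl fun ω _ => ?_
    rw [Finset.sum_eq_single (ω.2.1 i)]
    · simp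
    · intro b _ hb
      simp [Ne.symm hb]
    · simp
  rw [hR]
  unfold pr
  simp only [Fintype.sum_prod_type]
  refine Finset.sum_congr rfl fun w _ => Finset.sum_congr rfl fun x _ => ?_
  rw [Finset.sum_comm]
  refine Eq.trans ?_ Finset.sum_comm
  refine Finset.sum_congr rfl fun t _ => ?_
  have h := prod_extract (fun j => ch1 (x j)) i (hch1 _).2
    (fun y => if auxV n i (i+1) (w, x, y, t) = a then μ (w, x) * ∏ j, v2 (x j) (t j) else 0)
    (by
      intro y s'
      have : auxV n i (i+1) (w, x, Function.update y i s', t) = auxV n i (i+1) (w, x, y, t) := by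
        rw [auxV_eq_iff]
        refine ⟨rfl, fun j hj => ?_, fun _ _ => rfl⟩
        have : j ≠ i := by rintro rfl; omega
        simp [this]
      rw [this]) s
  rw [Finset.mul_sum] at h
  refine Eq.trans (Finset.sum_congr rfl fun y _ => ?_) (h.trans
    (Finset.sum_congr rfl fun y _ => ?_))
  · simp only [Prod.mk.injEq, jointYT]
    by_cases h1 : y i = s <;> by_cases h2 : auxV n i (i+1) (w, x, y, t) = a <;> simp [h1, h2]
    ring
  · simp only [jointYT]
    by_cases h2 : auxV n i (i+1) (w, x, y, t) = a <;> simp [h2]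
    ring

/-- Conditional entropy of the single-letter law, for an abstract mixture. -/
lemma condEnt_mix {Ω1 A B : Type*} [Fintype Ω1] [Fintype A] [Fintype B] {n m : ℕ}
    (p1 : Ω1 → ℝ) (S : Ω1 → B) (V : Ω1 → Fin m) (e : Fin m ≃ Fin n × A)
    {p : Ω → ℝ} (hp : IsPMF p) (U : Fin n → Ω → A) (R : Fin n → Ω → B)
    (h1 : ∀ i a, pr p1 V (e.symm (i, a)) = (1 / (n:ℝ)) * pr p (U i) a)
    (h2 : ∀ i a b, pr p1 (fun ω => (S ω, V ω)) (b, e.symm (i, a)) =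
      (1 / (n:ℝ)) * pr p (fun ω => (R i ω, U i ω)) (b, a)) :
    condEnt p1 S V = (1 / (n:ℝ)) *
      ∑ i, (ent p (fun ω => (R i ω, U i ω)) - ent p (U i)) := by
  have e1 : ent p1 V = ∑ i, ∑ a, -(((1 / (n:ℝ)) * pr p (U i) a) *
      Real.logb 2 ((1 / (n:ℝ)) * pr p (U i) a)) := by
    unfold ent
    rw [← Equiv.sum_comp e.symm, Fintype.sum_prod_type]
    simp only [h1]
  have e2 : ent p1 (fun ω => (S ω, V ω)) = ∑ i, ∑ a : B × A,
      -(((1 / (n:ℝ)) * pr p (fun ω => (R i ω, U i ω)) a) *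
      Real.logb 2 ((1 / (n:ℝ)) * pr p (fun ω => (R i ω, U i ω)) a)) := by
    unfold ent
    simp only [Fintype.sum_prod_type]
    refine Finset.sum_comm.trans ?_
    rw [← Equiv.sum_comp e.symm, Fintype.sum_prod_type]
    simp only [h2]
    exact Finset.sum_congr rfl fun i _ => Finset.sum_comm
  unfold condEnt
  rw [e1, e2, ent_scale _ _ (fun i => by rw [sum_pr, hp.2]),
    ent_scale _ _ (fun i => by rw [sum_pr, hp.2])]
  unfold ent
  rw [Finset.sum_sub_distrib]
  ring

lemma single_T {m : ℕ} {ch1 : X1 → Y1 → ℝ} (v2 : X1 → T → ℝ) (hch1 : IsKernel ch1)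
    (pW : Fin m → ℝ) (k : Fin m → X1 → ℝ) (w : Fin m) (s : T) :
    pr (fun ω => pW ω.1 * k ω.1 ω.2.1 * ch1 ω.2.1 ω.2.2.1 * v2 ω.2.1 ω.2.2.2 :
      Fin m × X1 × Y1 × T → ℝ) (fun ω => (ω.2.2.2, ω.1)) (s, w) =
      ∑ x, pW w * k w x * v2 x s := by
  unfold pr
  simp only [Fintype.sum_prod_type, Prod.mk.injEq]
  rw [Finset.sum_eq_single w]
  · refine Finset.sum_congr rfl fun x _ => ?_
    have : ∀ y, ∑ t, (if t = s ∧ w = w then pW w * k w x * ch1 x y * v2 x t else 0) =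
        (pW w * k w x * v2 x s) * ch1 x y := by
      intro y
      simp
      ring
    rw [Finset.sum_congr rfl fun y _ => this y, ← Finset.mul_sum, (hch1 x).2, mul_one]
  · intro b _ hb
    simp [hb]
  · simp

lemma single_Y {m : ℕ} (ch1 : X1 → Y1 → ℝ) {v2 : X1 → T → ℝ} (hv2 : IsKernel v2)
    (pW : Fin m → ℝ) (k : Fin m → X1 → ℝ) (w : Fin m) (s : Y1) :
    pr (fun ω => pW ω.1 * k ω.1 ω.2.1 * ch1 ω.2.1 ω.2.2.1 * v2 ω.2.1 ω.2.2.2 :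
      Fin m × X1 × Y1 × T → ℝ) (fun ω => (ω.2.2.1, ω.1)) (s, w) =
      ∑ x, pW w * k w x * ch1 x s := by
  unfold pr
  simp only [Fintype.sum_prod_type, Prod.mk.injEq]
  rw [Finset.sum_eq_single w]
  · refine Finset.sum_congr rfl fun x _ => ?_
    rw [Finset.sum_eq_single s]
    · simp [← Finset.mul_sum, (hv2 x).2]
    · intro b _ hb
      simp [hb]
    · simp
  · intro b _ hb
    simp [hb]
  · simp

lemma single_W {m : ℕ} {ch1 : X1 → Y1 → ℝ} {v2 : X1 → T → ℝ} (hch1 : IsKernel ch1)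
    (hv2 : IsKernel v2)
    (pW : Fin m → ℝ) (k : Fin m → X1 → ℝ) (hk : ∀ w, IsPMF (k w)) (w : Fin m) :
    pr (fun ω => pW ω.1 * k ω.1 ω.2.1 * ch1 ω.2.1 ω.2.2.1 * v2 ω.2.1 ω.2.2.2 :
      Fin m × X1 × Y1 × T → ℝ) (fun ω => ω.1) w = pW w := by
  rw [← pr_fst_sum _ (fun ω : Fin m × X1 × Y1 × T => ω.2.2.2)]
  simp only [single_T v2 hch1]
  rw [Finset.sum_comm]
  simp only [← Finset.mul_sum, (hv2 _).2, mul_one, (hk w).2]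

theorem stmt15 (ch1 : X1 → Y1 → ℝ) (v2 : X1 → T → ℝ)
    (hch1 : IsKernel ch1) (hv2 : IsKernel v2)
    (n : ℕ) (hn : 0 < n) (μ : Wt × (Fin n → X1) → ℝ) (hμ : IsPMF μ) :
    ∃ (m : ℕ) (pW : Fin m → ℝ) (k : Fin m → X1 → ℝ) (γ : ℝ),
      IsPMF pW ∧ (∀ w, IsPMF (k w)) ∧ 0 ≤ γ ∧
      (let p := jointYT ch1 v2 n μ
       let vWn := fun (ω : Wt × (Fin n → X1) × (Fin n → Y1) × (Fin n → T)) => ω.1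
       let vY1n := fun (ω : Wt × (Fin n → X1) × (Fin n → Y1) × (Fin n → T)) => ω.2.2.1
       let vTn := fun (ω : Wt × (Fin n → X1) × (Fin n → Y1) × (Fin n → T)) => ω.2.2.2
       let p1 : Fin m × X1 × Y1 × T → ℝ :=
         fun (w, x1, y1, t) => pW w * k w x1 * ch1 x1 y1 * v2 x1 t
       let vW := fun (ω : Fin m × X1 × Y1 × T) => ω.1
       let vY1 := fun (ω : Fin m × X1 × Y1 × T) => ω.2.2.1
       let vT := fun (ω : Fin m × X1 × Y1 × T) => ω.2.2.2
       (1 / (n : ℝ)) * condEnt p vTn vWn = condEnt p1 vT vW + γ ∧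
       (1 / (n : ℝ)) * condEnt p vY1n vWn = condEnt p1 vY1 vW + γ) := by
  have hp : IsPMF (jointYT ch1 v2 n μ) := jointYT_isPMF hch1 hv2 hμ
  have hx0 : Nonempty X1 := by
    by_contra hne
    rw [not_nonempty_iff] at hne
    have : IsEmpty (Wt × (Fin n → X1)) := ⟨fun v => hne.elim (v.2 ⟨0, hn⟩)⟩
    have h := hμ.2
    simp at h
  obtain ⟨x0⟩ := hx0
  have hn0 : (n : ℝ) ≠ 0 := by exact_mod_cast hn.ne'
  have hn1 : (0 : ℝ) ≤ 1 / (n : ℝ) := by positivity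
  let A := Wt × (Fin n → Option Y1) × (Fin n → Option T)
  let e : Fin (Fintype.card (Fin n × A)) ≃ Fin n × A := (Fintype.equivFin _).symm
  let p := jointYT ch1 v2 n μ
  let U : Fin n → (Wt × (Fin n → X1) × (Fin n → Y1) × (Fin n → T)) → A :=
    fun i => auxV n i (i + 1)
  let J : Fin n → A → X1 → ℝ := fun i a x => pr p (fun ω => (ω.2.1 i, U i ω)) (x, a)
  let q : Fin n → A → ℝ := fun i a => pr p (U i) a
  have hJ0 : ∀ i a x, 0 ≤ J i a x := fun i a x => pr_nonneg hp.1 _ _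
  have hq0 : ∀ i a, 0 ≤ q i a := fun i a => pr_nonneg hp.1 _ _
  have hJq : ∀ i a, ∑ x, J i a x = q i a := fun i a => pr_fst_sum p (fun ω => ω.2.1 i) (U i) a
  let pW : Fin (Fintype.card (Fin n × A)) → ℝ := fun w => (1 / (n : ℝ)) * q (e w).1 (e w).2
  let k : Fin (Fintype.card (Fin n × A)) → X1 → ℝ := fun w x =>
    if q (e w).1 (e w).2 = 0 then (if x = x0 then 1 else 0)
    else J (e w).1 (e w).2 x / q (e w).1 (e w).2
  have hpW : IsPMF pW := by
    refine ⟨fun w => mul_nonneg hn1 (hq0 _ _), ?_⟩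
    rw [← Equiv.sum_comp e.symm]
    simp only [pW, Equiv.apply_symm_apply]
    rw [← Finset.mul_sum, Fintype.sum_prod_type]
    have : ∀ i, ∑ a, q i a = 1 := fun i => (sum_pr p (U i)).trans hp.2
    simp only [this]
    simp [hn0]
  have hk : ∀ w, IsPMF (k w) := by
    intro w
    by_cases h : q (e w).1 (e w).2 = 0
    · simp only [IsPMF, k, h, if_true]
      refine ⟨fun x => by split_ifs <;> norm_num, by simp⟩
    · simp only [IsPMF, k, h, if_false]
      refine ⟨fun x => div_nonneg (hJ0 _ _ _) (hq0 _ _), ?_⟩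
      rw [← Finset.sum_div, hJq, div_self h]
  have hpk : ∀ w x, pW w * k w x = (1 / (n : ℝ)) * J (e w).1 (e w).2 x := by
    intro w x
    by_cases h : q (e w).1 (e w).2 = 0
    · have h' : J (e w).1 (e w).2 x = 0 := by
        have h2 := hJq (e w).1 (e w).2
        rw [h, Finset.sum_eq_zero_iff_of_nonneg (fun x _ => hJ0 _ _ x)] at h2
        exact h2 x (Finset.mem_univ x)
      simp only [pW, h, h', mul_zero, zero_mul]
    · simp only [pW, k, h, if_false]
      rw [mul_assoc, mul_div_cancel₀ _ h]
  let E : ℕ → ℕ → ℝ := fun a b => ent p (auxV n a b)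
  have hU : ∀ (i : Fin n) (ω ω' : Wt × (Fin n → X1) × (Fin n → Y1) × (Fin n → T)),
      U i ω = U i ω' ↔ ω.1 = ω'.1 ∧ (∀ j : Fin n, j.1 < i.1 → ω.2.2.1 j = ω'.2.2.1 j) ∧
      (∀ j : Fin n, i.1 + 1 ≤ j.1 → ω.2.2.2 j = ω'.2.2.2 j) :=
    fun i ω ω' => auxV_eq_iff n i (i + 1) ω ω'
  have hET : ∀ i : Fin n, ent p (fun ω => (ω.2.2.2 i, U i ω)) = E i i := by
    intro i
    refine ent_congr _ _ _ fun ω ω' => ?_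
    simp only [Prod.mk.injEq, hU, auxV_eq_iff]
    constructor
    · rintro ⟨h1, h2, h3, h4⟩
      refine ⟨h2, h3, fun j hj => ?_⟩
      rcases eq_or_ne j i with rfl | hji
      · exact h1
      · exact h4 j (by have := Fin.val_ne_of_ne hji; omega)
    · rintro ⟨h2, h3, h4⟩
      exact ⟨h4 i le_rfl, h2, h3, fun j hj => h4 j (by omega)⟩
  have hEY : ∀ i : Fin n, ent p (fun ω => (ω.2.2.1 i, U i ω)) = E (i + 1) (i + 1) := by
    intro i
    refine ent_congr _ _ _ fun ω ω' => ?_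
    simp only [Prod.mk.injEq, hU, auxV_eq_iff]
    constructor
    · rintro ⟨h1, h2, h3, h4⟩
      refine ⟨h2, fun j hj => ?_, h4⟩
      rcases eq_or_ne j i with rfl | hji
      · exact h1
      · exact h3 j (by have := Fin.val_ne_of_ne hji; omega)
    · rintro ⟨h2, h3, h4⟩
      exact ⟨h3 i (by omega), h2, fun j hj => h3 j (by omega), h4⟩
  have hE0n : ent p (fun ω => ω.1) = E 0 n := by
    refine ent_congr _ _ _ fun ω ω' => ?_
    rw [auxV_eq_iff]
    exact ⟨fun h => ⟨h, fun j hj => by omega, fun j hj => by omega⟩, fun h => h.1⟩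
  have hE00 : ent p (fun ω => (ω.2.2.2, ω.1)) = E 0 0 := by
    refine ent_congr _ _ _ fun ω ω' => ?_
    rw [auxV_eq_iff, Prod.mk.injEq, funext_iff]
    exact ⟨fun h => ⟨h.2, fun j hj => by omega, fun j hj => h.1 j⟩,
      fun h => ⟨fun j => h.2.2 j (Nat.zero_le _), h.1⟩⟩
  have hEnn : ent p (fun ω => (ω.2.2.1, ω.1)) = E n n := by
    refine ent_congr _ _ _ fun ω ω' => ?_
    rw [auxV_eq_iff, Prod.mk.injEq, funext_iff]
    exact ⟨fun h => ⟨h.2, fun j hj => h.1 j, fun j hj => by omega⟩,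
      fun h => ⟨fun j => h.2.1 j j.2, h.1⟩⟩
  have hsub : ∀ i : Fin n, E i i - E i (i + 1) ≤ E 0 i - E 0 (i + 1) := by
    intro i
    have h := ent_submod hp (fun ω => ω.2.2.2 i)
      (fun ω (j : Fin n) => if j.1 < i.1 then some (ω.2.2.1 j) else none) (auxV n 0 (i + 1))
    have hY : ∀ ω ω' : Wt × (Fin n → X1) × (Fin n → Y1) × (Fin n → T),
        ((fun (j : Fin n) => if j.1 < i.1 then some (ω.2.2.1 j) else none) =
        (fun (j : Fin n) => if j.1 < i.1 then some (ω'.2.2.1 j) else none)) ↔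
        ∀ j : Fin n, j.1 < i.1 → ω.2.2.1 j = ω'.2.2.1 j := by
      intro ω ω'
      rw [funext_iff]
      refine forall_congr' fun j => ?_
      by_cases h : j.1 < i.1 <;> simp [h]
    have h1 : ent p (fun ω => (ω.2.2.2 i,
        (fun (j : Fin n) => if j.1 < i.1 then some (ω.2.2.1 j) else none),
        auxV n 0 (i + 1) ω)) = E i i := by
      refine (ent_congr _ _ _ fun ω ω' => ?_).trans (hET i)
      simp only [Prod.mk.injEq, hU, auxV_eq_iff, hY]
      exact ⟨fun h => ⟨h.1, h.2.2.1, h.2.1, h.2.2.2.2⟩,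
        fun h => ⟨h.1, h.2.2.1, h.2.1, fun j hj => by omega, h.2.2.2⟩⟩
    have h2 : ent p (fun ω => (ω.2.2.2 i, auxV n 0 (i + 1) ω)) = E 0 i := by
      refine ent_congr _ _ _ fun ω ω' => ?_
      simp only [Prod.mk.injEq, auxV_eq_iff]
      constructor
      · rintro ⟨h1, h2, h3, h4⟩
        refine ⟨h2, h3, fun j hj => ?_⟩
        rcases eq_or_ne j i with rfl | hji
        · exact h1
        · exact h4 j (by have := Fin.val_ne_of_ne hji; omega)
      · rintro ⟨h2, h3, h4⟩
        exact ⟨h4 i le_rfl, h2, h3, fun j hj => h4 j (by omega)⟩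
    have h3 : ent p (fun ω => ((fun (j : Fin n) => if j.1 < i.1 then some (ω.2.2.1 j) else none),
        auxV n 0 (i + 1) ω)) = E i (i + 1) := by
      refine ent_congr _ _ _ fun ω ω' => ?_
      simp only [Prod.mk.injEq, auxV_eq_iff, hY]
      exact ⟨fun h => ⟨h.2.1, h.1, h.2.2.2⟩,
        fun h => ⟨h.2.1, h.1, fun j hj => by omega, h.2.2⟩⟩
    have h4 : ent p (auxV n 0 (i + 1)) = E 0 (i + 1) := rfl
    have h' := (add_le_add h1.ge h4.ge).trans (h.trans (add_le_add h2.le h3.le))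
    linarith
  have htel : ∀ f : ℕ → ℝ, ∑ i : Fin n, (f i - f (i + 1)) = f 0 - f n := by
    intro f
    rw [Fin.sum_univ_eq_sum_range (fun i => f i - f (i + 1)) n, Finset.sum_range_sub']
  refine ⟨Fintype.card (Fin n × A), pW, k,
    (1 / (n : ℝ)) * (E 0 0 - E 0 n - ∑ i : Fin n, (E i i - E i (i + 1))),
    hpW, hk, ?_, ?_, ?_⟩
  · refine mul_nonneg hn1 ?_
    have h1 := Finset.sum_le_sum (s := Finset.univ) (fun i _ => hsub i)
    rw [htel (fun i => E 0 i)] at h1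
    linarith
  · rw [condEnt_mix (n := n) _ _ _ e hp U (fun i ω => ω.2.2.2 i)]
    · have hc : condEnt p (fun ω => ω.2.2.2) (fun ω => ω.1) = E 0 0 - E 0 n := by
        unfold condEnt
        rw [hE00, hE0n]
      have hs : ∑ i, (ent p (fun ω => (ω.2.2.2 i, U i ω)) - ent p (U i)) =
          ∑ i : Fin n, (E i i - E i (i + 1)) :=
        Finset.sum_congr rfl fun i _ => by rw [hET]
      refine (congrArg _ hc).trans ?_
      refine Eq.trans ?_ (congrArg (fun z => (1 / (n : ℝ)) * z + _) hs.symm)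
      ring
    · intro i a
      refine (single_W hch1 hv2 pW k hk _).trans ?_
      simp only [pW, Equiv.apply_symm_apply]
      rfl
    · intro i a t
      refine (single_T v2 hch1 pW k _ t).trans ?_
      refine Eq.trans ?_ (congrArg (fun z => (1 / (n : ℝ)) * z) (extract_T (ch1 := ch1) hv2 μ i a t).symm)
      simp only [hpk, Equiv.apply_symm_apply]
      rw [Finset.mul_sum]
      exact Finset.sum_congr rfl fun x _ => mul_assoc _ _ _
  · rw [condEnt_mix (n := n) _ _ _ e hp U (fun i ω => ω.2.2.1 i)]
    · have hc : condEnt p (fun ω => ω.2.2.1) (fun ω => ω.1) = E n n - E 0 n := by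
        unfold condEnt
        rw [hEnn, hE0n]
      have hs : ∑ i, (ent p (fun ω => (ω.2.2.1 i, U i ω)) - ent p (U i)) =
          ∑ i : Fin n, (E i i - E i (i + 1)) - (E 0 0 - E n n) := by
        rw [← htel (fun i => E i i), ← Finset.sum_sub_distrib]
        refine Finset.sum_congr rfl fun i _ => ?_
        rw [hEY]
        have : ent p (U i) = E i (i + 1) := rfl
        rw [this]
        ring
      refine (congrArg _ hc).trans ?_
      refine Eq.trans ?_ (congrArg (fun z => (1 / (n : ℝ)) * z + _) hs.symm)
      ring
    · intro i a
      refine (single_W hch1 hv2 pW k hk _).trans ?_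
      simp only [pW, Equiv.apply_symm_apply]
      rfl
    · intro i a t
      refine (single_Y ch1 hv2 pW k _ t).trans ?_
      refine Eq.trans ?_ (congrArg (fun z => (1 / (n : ℝ)) * z) (extract_Y (v2 := v2) hch1 μ i a t).symm)
      simp only [hpk, Equiv.apply_symm_apply]
      rw [Finset.mul_sum]
      exact Finset.sum_congr rfl fun x _ => mul_assoc _ _ _

end Stmt15

end Paper
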